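/- Let μ be the beta Hermite ensemble on ℝⁿ with density proportional to e^{−(n/2)|x|²} ∏_{i<j}(x_i − x_j)^β on {x₁ ≥ … ≥ xₙ}, β > 0. Then the second moment of μ satisfies ∫_{ℝⁿ} |x|² μ(dx) = 1 + (n−1)β/2. -/

import Mathlib

/-!
The density factors as `exp (-(n/2) ‖x‖²) * W x`, where the weight `W` (the Vandermonde product
to the power `β`, cut off to the open Weyl chamber) is homogeneous of degree `p = β n (n - 1) / 2`.
For such a weight on a `d`-dimensional space, the substitution `x ↦ r • x` gives
`∫ exp (-a r² ‖x‖²) W x dx = r ^ (-(p + d)) ∫ exp (-a ‖x‖²) W x dx`,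
and differentiating at `r = 1` gives
`∫ ‖x‖² exp (-a ‖x‖²) W x dx = (p + d) / (2 a) ∫ exp (-a ‖x‖²) W x dx`
(`integral_sq_norm_of_homogeneous`). With `a = n / 2` and `d = n` the factor is
`(p + n) / n = 1 + (n - 1) β / 2`.
-/

open MeasureTheory Real Set
open scoped ENNReal BigOperators

section Homogeneous

variable {E : Type*} [NormedAddCommGroup E] [InnerProductSpace ℝ E] [FiniteDimensional ℝ E]
  [MeasurableSpace E] [BorelSpace E]

lemma gauss_smul {W : E → ℝ} {p a r : ℝ} (hr : 0 < r)
    (hW : ∀ r : ℝ, 0 < r → ∀ x, W (r • x) = r ^ p * W x) (x : E) :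
    exp (-(a * r ^ 2) * ‖x‖ ^ 2) * W x
      = r ^ (-p) * (exp (-a * ‖r • x‖ ^ 2) * W (r • x)) := by
  have h : r ^ (-p) * r ^ p = 1 := by rw [← rpow_add hr]; simp
  have e : -a * ‖r • x‖ ^ 2 = -(a * r ^ 2) * ‖x‖ ^ 2 := by
    rw [norm_smul, mul_pow, norm_eq_abs, sq_abs]; ring
  rw [hW r hr, e]
  linear_combination (-(exp (-(a * r ^ 2) * ‖x‖ ^ 2) * W x)) * h

lemma integrable_gauss_scale {W : E → ℝ} {p a r : ℝ} (hr : 0 < r)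
    (hW : ∀ r : ℝ, 0 < r → ∀ x, W (r • x) = r ^ p * W x)
    (hint : Integrable (fun x => exp (-a * ‖x‖ ^ 2) * W x) volume) :
    Integrable (fun x => exp (-(a * r ^ 2) * ‖x‖ ^ 2) * W x) volume := by
  simp_rw [gauss_smul hr hW]
  exact (hint.comp_smul hr.ne').const_mul _

lemma integral_gauss_scale {W : E → ℝ} {p a r : ℝ} (hr : 0 < r)
    (hW : ∀ r : ℝ, 0 < r → ∀ x, W (r • x) = r ^ p * W x) :
    ∫ x, exp (-(a * r ^ 2) * ‖x‖ ^ 2) * W x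
      = r ^ (-(p + Module.finrank ℝ E)) * ∫ x, exp (-a * ‖x‖ ^ 2) * W x := by
  simp_rw [gauss_smul hr hW]
  rw [integral_const_mul,
    Measure.integral_comp_smul volume (fun x => exp (-a * ‖x‖ ^ 2) * W x) r, smul_eq_mul,
    abs_of_pos (by positivity), neg_add, rpow_add hr, rpow_neg hr.le (Module.finrank ℝ E : ℝ),
    rpow_natCast, mul_assoc]

/-- Euler's identity for a Gaussian measure weighted by a homogeneous function of degree `p`:
the derivative at `r = 1` of the scaling relation `integral_gauss_scale`. -/
lemma integral_sq_norm_of_homogeneous {W : E → ℝ} {p a : ℝ} (ha : 0 < a)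
    (hW : ∀ r : ℝ, 0 < r → ∀ x, W (r • x) = r ^ p * W x)
    (hint : Integrable (fun x => exp (-a * ‖x‖ ^ 2) * W x) volume) :
    2 * a * ∫ x, ‖x‖ ^ 2 * (exp (-a * ‖x‖ ^ 2) * W x)
      = (p + Module.finrank ℝ E) * ∫ x, exp (-a * ‖x‖ ^ 2) * W x := by
  -- for `|r - 1| < 1/2` the `r`-derivative is dominated by the rescaled integrand at `r = 1/4`,
  -- because `(3a/16) y ≤ exp (3a/16 y)` absorbs the factor `y = ‖x‖²`
  have key := hasDerivAt_integral_of_dominated_loc_of_deriv_le (μ := (volume : Measure E))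
    (F := fun (r : ℝ) x => exp (-(a * r ^ 2) * ‖x‖ ^ 2) * W x)
    (F' := fun (r : ℝ) x => -(2 * a * r) * (‖x‖ ^ 2 * (exp (-(a * r ^ 2) * ‖x‖ ^ 2) * W x)))
    (x₀ := 1) (s := Metric.ball 1 (1 / 2))
    (bound := fun x => 16 * ‖exp (-(a * (1 / 4 : ℝ) ^ 2) * ‖x‖ ^ 2) * W x‖)
    (Metric.ball_mem_nhds _ (by norm_num)) ?_ ?_ ?_ ?_ ?_ ?_
  · have h1 := key.2
    have h2 : HasDerivAt (fun r : ℝ => ∫ x, exp (-(a * r ^ 2) * ‖x‖ ^ 2) * W x)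
        ((-(p + Module.finrank ℝ E) * (1 : ℝ) ^ (-(p + Module.finrank ℝ E) - 1)) *
          ∫ x, exp (-a * ‖x‖ ^ 2) * W x) 1 := by
      refine ((hasDerivAt_rpow_const (Or.inl one_ne_zero)).mul_const _).congr_of_eventuallyEq ?_
      filter_upwards [lt_mem_nhds (zero_lt_one' ℝ)] with r hr
      exact integral_gauss_scale hr hW
    have h3 := h1.unique h2
    simp only [one_pow, mul_one, one_rpow, integral_const_mul] at h3
    linarith
  · filter_upwards [lt_mem_nhds (zero_lt_one' ℝ)] with r hr
    exact (integrable_gauss_scale hr hW hint).aestronglyMeasurable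
  · exact integrable_gauss_scale one_pos hW hint
  · refine AEStronglyMeasurable.const_mul ?_ _
    exact (Continuous.aestronglyMeasurable (by fun_prop)).mul
      (integrable_gauss_scale one_pos hW hint).aestronglyMeasurable
  · refine Filter.Eventually.of_forall fun x r hr => ?_
    rw [Metric.mem_ball, Real.dist_eq, abs_lt] at hr
    set y := ‖x‖ ^ 2 with hy
    have hy0 : 0 ≤ y := by positivity
    have hr0 : 0 < r := by linarith
    simp only [norm_mul, norm_neg, norm_eq_abs, abs_exp, abs_of_pos hr0, abs_of_pos ha,
      abs_of_nonneg hy0, abs_two]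
    have e1 : 3 * a / 16 * y ≤ exp (3 * a / 16 * y) := by
      linarith [add_one_le_exp (3 * a / 16 * y)]
    have e2 : exp (-(a * r ^ 2) * y) ≤ exp (-(a / 4) * y) := by
      apply exp_le_exp.2
      have : 1 / 4 ≤ r ^ 2 := by nlinarith
      nlinarith [mul_le_mul_of_nonneg_left this (mul_nonneg ha.le hy0)]
    have e3 : exp (3 * a / 16 * y) * exp (-(a / 4) * y) = exp (-(a * (1 / 4) ^ 2) * y) := by
      rw [← exp_add]; congr 1; ring
    calc 2 * a * r * (y * (exp (-(a * r ^ 2) * y) * |W x|))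
        ≤ 2 * a * (3 / 2) * (y * (exp (-(a / 4) * y) * |W x|)) := by
          gcongr; linarith
      _ = 16 * (3 * a / 16 * y * exp (-(a / 4) * y) * |W x|) := by ring
      _ ≤ 16 * (exp (3 * a / 16 * y) * exp (-(a / 4) * y) * |W x|) := by gcongr
      _ = _ := by rw [e3]
  · exact (integrable_gauss_scale (by norm_num) hW hint).norm.const_mul _
  · refine Filter.Eventually.of_forall fun x r _ => ?_
    have h : HasDerivAt (fun r : ℝ => -(a * r ^ 2) * ‖x‖ ^ 2) (-(a * (2 * r)) * ‖x‖ ^ 2) r := by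
      simpa using (((hasDerivAt_pow 2 r).const_mul a).neg).mul_const (‖x‖ ^ 2)
    refine (h.exp.mul_const (W x)).congr_deriv ?_
    ring

end Homogeneous

lemma sum_pairs (n : ℕ) (β : ℝ) :
    ∑ i : Fin n, ∑ j : Fin n, (if i < j then β else 0) = β * n * (n - 1) / 2 := by
  -- pairs with `i < j` and pairs with `j < i` contribute equally, and with the diagonal fill `n²`
  have h1 : ∑ i : Fin n, ∑ j : Fin n, (if i < j then β else 0)
      = ∑ i : Fin n, ∑ j : Fin n, (if j < i then β else 0) := Finset.sum_comm
  have h2 : ∑ i : Fin n, ∑ j : Fin n, ((if i < j then β else 0) + (if j < i then β else 0)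
      + (if i = j then β else 0)) = ∑ i : Fin n, ∑ j : Fin n, β := by
    refine Finset.sum_congr rfl fun i _ => Finset.sum_congr rfl fun j _ => ?_
    rcases lt_trichotomy i j with h | h | h
    · simp [h, h.not_gt, h.ne]
    · simp [h]
    · simp [h, h.not_gt, h.ne']
  simp only [Finset.sum_add_distrib] at h2
  rw [← h1] at h2
  simp at h2 ⊢
  linarith

/-- The Vandermonde weight restricted to the open Weyl chamber is homogeneous. -/
lemma vandermonde_smul {n : ℕ} (β : ℝ) (r : ℝ) (hr : 0 < r) (x : EuclideanSpace ℝ (Fin n)) :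
    ({x : EuclideanSpace ℝ (Fin n) | ∀ i j : Fin n, i < j → x j < x i}.indicator fun x =>
      ∏ i : Fin n, ∏ j : Fin n, if i < j then (x i - x j) ^ β else 1) (r • x)
    = r ^ (β * n * (n - 1) / 2) *
      ({x : EuclideanSpace ℝ (Fin n) | ∀ i j : Fin n, i < j → x j < x i}.indicator fun x =>
      ∏ i : Fin n, ∏ j : Fin n, if i < j then (x i - x j) ^ β else 1) x := by
  have hmem : (r • x ∈ {x : EuclideanSpace ℝ (Fin n) | ∀ i j : Fin n, i < j → x j < x i}) ↔
      x ∈ {x : EuclideanSpace ℝ (Fin n) | ∀ i j : Fin n, i < j → x j < x i} := by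
    simp [hr]
  by_cases hx : x ∈ {x : EuclideanSpace ℝ (Fin n) | ∀ i j : Fin n, i < j → x j < x i}
  · rw [indicator_of_mem (hmem.2 hx), indicator_of_mem hx, ← sum_pairs,
      rpow_sum_of_pos hr, ← Finset.prod_mul_distrib]
    refine Finset.prod_congr rfl fun i _ => ?_
    rw [rpow_sum_of_pos hr, ← Finset.prod_mul_distrib]
    refine Finset.prod_congr rfl fun j _ => ?_
    split_ifs with h
    · have : 0 ≤ x i - x j := sub_nonneg.2 (hx i j h).le
      rw [← mul_rpow hr.le this]
      simp [mul_sub]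
    · simp
  · rw [indicator_of_notMem (fun h => hx (hmem.1 h)), indicator_of_notMem hx, mul_zero]

/-- **Second moment of the beta Hermite ensemble**: for the measure `μ` on `ℝⁿ` with
density proportional to `exp(-(n/2)|x|²) ∏_{i<j} (xᵢ - xⱼ)^β` on the Weyl chamber
`{x₁ ≥ … ≥ xₙ}`, one has `∫ |x|² dμ = 1 + (n-1)β/2`. -/
theorem beta_hermite_second_moment
    {n : ℕ} (hn : 0 < n) (β : ℝ) (hβ : 0 < β)
    (D : Set (EuclideanSpace ℝ (Fin n)))
    (hD : D = {x | ∀ i j : Fin n, i < j → x j < x i})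
    (dens : EuclideanSpace ℝ (Fin n) → ℝ)
    (hdens : dens = D.indicator fun x =>
      Real.exp (-(n / 2 : ℝ) * ‖x‖ ^ 2) *
        ∏ i : Fin n, ∏ j : Fin n, if i < j then (x i - x j) ^ β else 1)
    (hint : Integrable dens volume)
    (Z : ℝ) (hZ : Z = ∫ x, dens x) (hZpos : 0 < Z)
    (μ : Measure (EuclideanSpace ℝ (Fin n)))
    (hμ : μ = volume.withDensity fun x => ENNReal.ofReal (dens x / Z)) :
    ∫ x, ‖x‖ ^ 2 ∂μ = 1 + ((n : ℝ) - 1) * β / 2 := by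
  set W : EuclideanSpace ℝ (Fin n) → ℝ :=
    {x : EuclideanSpace ℝ (Fin n) | ∀ i j : Fin n, i < j → x j < x i}.indicator fun x =>
      ∏ i : Fin n, ∏ j : Fin n, if i < j then (x i - x j) ^ β else 1 with hWdef
  have hdW : dens = fun x => exp (-(n / 2 : ℝ) * ‖x‖ ^ 2) * W x := by
    rw [hdens, hD]
    ext x
    rw [hWdef, indicator_mul_right]
  have hn' : (0 : ℝ) < n := by exact_mod_cast hn
  have hnn : ∀ x, 0 ≤ dens x := by
    intro x
    rw [hdens]
    refine indicator_nonneg (fun y hy => ?_) x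
    refine mul_nonneg (exp_pos _).le (Finset.prod_nonneg fun i _ => Finset.prod_nonneg fun j _ => ?_)
    split_ifs with h
    · rw [hD] at hy
      exact rpow_nonneg (sub_nonneg.2 (hy i j h).le) _
    · exact zero_le_one
  have key := integral_sq_norm_of_homogeneous (W := W) (p := β * n * (n - 1) / 2)
    (a := (n / 2 : ℝ)) (by positivity) (vandermonde_smul β) (by rwa [← hdW])
  have hI : ∫ x, ‖x‖ ^ 2 ∂μ = Z⁻¹ * ∫ x, ‖x‖ ^ 2 * dens x := by
    rw [hμ, integral_withDensity_eq_integral_toReal_smul₀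
      (hint.aestronglyMeasurable.aemeasurable.div_const Z).ennreal_ofReal
      (Filter.Eventually.of_forall fun _ => ENNReal.ofReal_lt_top), ← integral_const_mul]
    refine integral_congr_ae (Filter.Eventually.of_forall fun x => ?_)
    simp only [ENNReal.toReal_ofReal (div_nonneg (hnn x) hZpos.le), smul_eq_mul]
    ring
  rw [hdW] at hZ
  rw [← hZ, finrank_euclideanSpace_fin] at key
  rw [hI, hdW]
  rw [inv_mul_eq_div, div_eq_iff hZpos.ne']
  refine mul_left_cancel₀ hn'.ne' ?_
  linear_combination key
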